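/- arXiv:2009.14729 — 2 statements merged into one kernel-verified Lean document; each statement's English description precedes it below -/
import Mathlib

section
/- Chain concatenation bound (the key estimate in the proof of Lemma 2.2): let w be a weight function on a finite vertex set V, let t ≥ 1, σ, β ∈ ℕ, and R, δ ∈ [0,∞]. Suppose r_0, r_1, …, r_t, x_0, …, x_{t−1}, and y_1, …, y_t are vertices such that d_w^{(σ)}(r_j, x_j) ≤ R for all 0 ≤ j ≤ t−1, d_w^{(σ)}(r_j, y_j) ≤ R for all 1 ≤ j ≤ t, and d_w^{(2β+1)}(x_j, y_{j+1}) ≤ δ for all 0 ≤ j ≤ t−1. Then d_w^{(t(2σ+2β+1))}(r_0, r_t) ≤ t·(δ + 2R). -/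
open scoped ENNReal BigOperators

/-- The `t`-hop-bounded distance for a weight function `w` on `V`: the infimum,
over all sequences `u = x 0, x 1, ..., x m = v` with `m <= t`, of
the total weight `Sum_{j<m} w (x j) (x (j+1))`. -/
noncomputable def hopDist {V : Type*} (w : V → V → ℝ≥0∞) (t : ℕ) (u v : V) : ℝ≥0∞ :=
  ⨅ (m : ℕ) (_ : m ≤ t) (x : ℕ → V) (_ : x 0 = u) (_ : x m = v),
    ∑ j ∈ Finset.range m, w (x j) (x (j + 1))

/-- The distance for a weight function `w`: the infimum of hop-bounded distances. -/
noncomputable def graphDist {V : Type*} (w : V → V → ℝ≥0∞) (u v : V) : ℝ≥0∞ :=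
  ⨅ t : ℕ, hopDist w t u v

theorem hopDist_le_path {V : Type*} (w : V → V → ℝ≥0∞) {t m : ℕ} (h : m ≤ t) (x : ℕ → V) :
    hopDist w t (x 0) (x m) ≤ ∑ j ∈ Finset.range m, w (x j) (x (j + 1)) :=
  iInf_le_of_le m (iInf_le_of_le h (iInf_le_of_le x (iInf_le_of_le rfl (iInf_le_of_le rfl le_rfl))))

theorem hopDist_triangle {V : Type*} (w : V → V → ℝ≥0∞) (a b : ℕ) (u z v : V) :
    hopDist w (a + b) u v ≤ hopDist w a u z + hopDist w b z v := by
  conv_rhs => simp only [hopDist]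
  simp only [ENNReal.iInf_add, ENNReal.add_iInf]
  simp only [le_iInf_iff]
  intro n hn y hy0 hyn m hm x hx0 hxm
  let q : ℕ → V := fun i => if i < m then x i else y (i - m)
  have q1 : ∀ i ≤ m, q i = x i := by
    intro i hi
    rcases hi.lt_or_eq with h | h
    · simp [q, h]
    · subst h
      simp [q, hy0, hxm]
  have q2 : ∀ i, q (m + i) = y i := by
    intro i
    simp [q]
  have key := hopDist_le_path w (t := a + b) (m := m + n) (by omega) q
  rw [q1 0 (Nat.zero_le _), q2, hx0, hyn, Finset.sum_range_add] at key
  refine key.trans (le_of_eq ?_)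
  congr 1
  · refine Finset.sum_congr rfl fun i hi => ?_
    have := Finset.mem_range.1 hi
    rw [q1 i (by omega), q1 (i + 1) (by omega)]
  · refine Finset.sum_congr rfl fun i hi => ?_
    rw [add_assoc, q2, q2]

theorem hopDist_symm_le {V : Type*} (w : V → V → ℝ≥0∞) (hsymm : ∀ a b, w a b = w b a)
    (t : ℕ) (u v : V) : hopDist w t u v ≤ hopDist w t v u := by
  conv_rhs => simp only [hopDist]
  simp only [le_iInf_iff]
  intro m hm x hx0 hxm
  have key := hopDist_le_path w hm (fun i => x (m - i))
  simp only [Nat.sub_zero, Nat.sub_self, hx0, hxm] at key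
  refine key.trans (le_of_eq ?_)
  rw [← Finset.sum_range_reflect]
  refine Finset.sum_congr rfl fun i hi => ?_
  have := Finset.mem_range.1 hi
  rw [hsymm]
  congr 2 <;> omega

/-- chain concatenation bound (key estimate in the proof of
Lemma 2.2 of the paper). -/
theorem chain_concat {V : Type*} [Fintype V] (w : V → V → ℝ≥0∞)
    (hsymm : ∀ a b, w a b = w b a)
    (t σ β : ℕ) (ht : 1 ≤ t) (R δ : ℝ≥0∞)
    (r x y : ℕ → V)
    (hx : ∀ j < t, hopDist w σ (r j) (x j) ≤ R)
    (hy : ∀ j, 1 ≤ j → j ≤ t → hopDist w σ (r j) (y j) ≤ R)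
    (hxy : ∀ j < t, hopDist w (2 * β + 1) (x j) (y (j + 1)) ≤ δ) :
    hopDist w (t * (2 * σ + 2 * β + 1)) (r 0) (r t) ≤ (t : ℝ≥0∞) * (δ + 2 * R) := by
  clear ht
  induction t with
  | zero =>
    have := hopDist_le_path w (le_refl 0) (fun _ => r 0)
    simpa using this
  | succ t ih =>
    have h1 := ih (fun j hj => hx j (by omega)) (fun j h1 h2 => hy j h1 (by omega))
      (fun j hj => hxy j (by omega))
    have h2 := hx t (by omega)
    have h3 := hxy t (by omega)
    have h4 := (hopDist_symm_le w hsymm σ (y (t + 1)) (r (t + 1))).trans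
      (hy (t + 1) (by omega) le_rfl)
    have e : (t + 1) * (2 * σ + 2 * β + 1)
        = t * (2 * σ + 2 * β + 1) + (σ + ((2 * β + 1) + σ)) := by ring
    rw [e]
    calc _ ≤ _ + _ := hopDist_triangle w _ _ _ (r t) _
      _ ≤ _ + (_ + _) := by gcongr; exact hopDist_triangle w _ _ _ (x t) _
      _ ≤ _ + (_ + (_ + _)) := by gcongr; exact hopDist_triangle w _ _ _ (y (t + 1)) _
      _ ≤ t * (δ + 2 * R) + (R + (δ + R)) := by gcongr
      _ = _ := by push_cast; ring
end

section
/- Existence form of the main hopset theorem (Theorem 3.5, without the computational complexity claims): there is an absolute constant c > 0 with the following property. Let V be a finite set with n = |V| ≥ 2, and let w : V → V → [0,∞] be a weight function all of whose finite off-diagonal values are at least 1, such that d_w(u,v) < ∞ for all u,v (G is connected); let Λ = max_{u≠v} d_w(u,v) ≥ 2 be the aspect ratio. Let 0 < ε < 1 be real, κ ≥ 2 an integer, and 0 < ρ < 1/2 real with κρ ≥ 1, and set ℓ = ⌊log₂(κρ)⌋ + ⌈(κ+1)/(κρ)⌉ − 1 and β = ⌈(c · log₂Λ · log₂ n · (log₂(κρ)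 + 1/ρ) / ε)^ℓ⌉. Then there exists a weight function w_H on V whose set of pairs with finite value (the hopset edges) has cardinality at most ⌈log₂Λ⌉ · n^{1+1/κ}, such that, with w' the pointwise minimum of w and w_H, every pair u, v ∈ V satisfies d_w(u,v) ≤ d_{w'}^{(β)}(u,v) ≤ (1+ε) · d_w(u,v). -/
open scoped ENNReal BigOperators

lemma hop_le {V : Type*} (w : V → V → ℝ≥0∞) (t m : ℕ) (hm : m ≤ t) (x : ℕ → V) :
    hopDist w t (x 0) (x m) ≤ ∑ j ∈ Finset.range m, w (x j) (x (j + 1)) := by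
  unfold hopDist
  exact iInf_le_of_le m (iInf_le_of_le hm (iInf_le_of_le x (iInf_le_of_le rfl (iInf_le_of_le rfl le_rfl))))

lemma le_hop {V : Type*} (w : V → V → ℝ≥0∞) (t : ℕ) (u v : V) (a : ℝ≥0∞)
    (h : ∀ m ≤ t, ∀ x : ℕ → V, x 0 = u → x m = v →
      a ≤ ∑ j ∈ Finset.range m, w (x j) (x (j + 1))) : a ≤ hopDist w t u v := by
  unfold hopDist
  exact le_iInf fun m => le_iInf fun hm => le_iInf fun x => le_iInf fun h0 => le_iInf fun h1 =>
    h m hm x h0 h1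

lemma hop_refl {V : Type*} (w : V → V → ℝ≥0∞) (t : ℕ) (u : V) : hopDist w t u u = 0 := by
  have := hop_le w t 0 (Nat.zero_le _) (fun _ => u)
  simpa using this

lemma hop_mono {V : Type*} (w : V → V → ℝ≥0∞) {s t : ℕ} (h : s ≤ t) (u v : V) :
    hopDist w t u v ≤ hopDist w s u v := by
  apply le_hop
  rintro m hm x rfl rfl
  exact hop_le w t m (hm.trans h) x

lemma hop_cons {V : Type*} (w : V → V → ℝ≥0∞) (t : ℕ) (u x v : V) :
    hopDist w (t + 1) u v ≤ w u x + hopDist w t x v := by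
  rw [hopDist.eq_1 w t]
  simp only [ENNReal.add_iInf]
  refine le_iInf fun m => ?_
  by_cases hm : m ≤ t
  swap
  · simp [hm]
  simp only [hm, iInf_pos]
  refine le_iInf fun y => ?_
  by_cases h0 : y 0 = x
  swap
  · simp [h0]
  by_cases h1 : y m = v
  swap
  · simp [h0, h1]
  simp only [h0, h1, iInf_pos]
  have := hop_le w (t+1) (m+1) (by omega) (fun j => Nat.casesOn j u y)
  simp only [Finset.sum_range_succ'] at this
  simp only [h0, h1] at this
  rw [add_comm (w u x)]
  exact this

lemma hop_add {V : Type*} (w : V → V → ℝ≥0∞) (s t : ℕ) (u x v : V) :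
    hopDist w (s + t) u v ≤ hopDist w s u x + hopDist w t x v := by
  by_cases hf : hopDist w t x v = ⊤
  · simp [hf]
  rw [← tsub_le_iff_right]
  apply le_hop
  intro m hm y h0 h1
  rw [tsub_le_iff_right]
  refine (hop_mono w (show m + t ≤ s + t by omega) u v).trans ?_
  clear hm
  induction m generalizing u y with
  | zero => simp [← h1, ← h0]
  | succ m ih =>
    have := ih (y 1) (fun j => y (j+1)) rfl h1
    rw [Finset.sum_range_succ']
    rw [show m + 1 + t = (m + t) + 1 by omega]
    refine (hop_cons w (m+t) u (y 1) v).trans ?_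
    calc w u (y 1) + hopDist w (m+t) (y 1) v ≤ w u (y 1) + (∑ j ∈ Finset.range m, w (y (j + 1)) (y (j + 1 + 1)) + hopDist w t x v) := by
          gcongr
      _ = _ := by simp only [← h0, zero_add]; ring

lemma hop_symm {V : Type*} (w : V → V → ℝ≥0∞) (hw : ∀ a b, w a b = w b a) (t : ℕ) (u v : V) :
    hopDist w t u v ≤ hopDist w t v u := by
  apply le_hop
  rintro m hm x rfl rfl
  have := hop_le w t m hm (fun j => x (m - j))
  simp only [Nat.sub_zero, Nat.sub_self] at this
  refine this.trans (le_of_eq ?_)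
  rw [← Finset.sum_range_reflect]
  apply Finset.sum_congr rfl
  intro j hj
  have hj := Finset.mem_range.1 hj
  rw [hw]
  congr 2 <;> omega

lemma hop_one {V : Type*} (w : V → V → ℝ≥0∞) (u v : V) : hopDist w 1 u v ≤ w u v := by
  have := hop_cons w 0 u v v
  simpa [hop_refl] using this

lemma gd_le_hop {V : Type*} (w : V → V → ℝ≥0∞) (t : ℕ) (u v : V) :
    graphDist w u v ≤ hopDist w t u v := iInf_le _ t

lemma gd_le {V : Type*} (w : V → V → ℝ≥0∞) (u v : V) : graphDist w u v ≤ w u v :=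
  (gd_le_hop w 1 u v).trans (hop_one w u v)

lemma gd_refl {V : Type*} (w : V → V → ℝ≥0∞) (u : V) : graphDist w u u = 0 := by
  have := gd_le_hop w 0 u u
  simpa [hop_refl] using this

lemma gd_symm {V : Type*} (w : V → V → ℝ≥0∞) (hw : ∀ a b, w a b = w b a) (u v : V) :
    graphDist w u v = graphDist w v u := by
  apply le_antisymm <;> exact iInf_mono fun t => hop_symm w hw t _ _

lemma gd_tri {V : Type*} (w : V → V → ℝ≥0∞) (u x v : V) :
    graphDist w u v ≤ graphDist w u x + graphDist w x v := by
  rw [graphDist.eq_1 w u x, graphDist.eq_1 w x v]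
  simp only [ENNReal.iInf_add, ENNReal.add_iInf]
  exact le_iInf fun s => le_iInf fun t => (gd_le_hop w _ u v).trans (hop_add w _ _ u x v)

lemma gd_lower {V : Type*} (w w' : V → V → ℝ≥0∞) (h : ∀ a b, graphDist w a b ≤ w' a b)
    (t : ℕ) (u v : V) : graphDist w u v ≤ hopDist w' t u v := by
  apply le_hop
  intro m _ x h0 h1
  subst h0 h1
  induction m with
  | zero => simp [gd_refl]
  | succ m ih =>
    rw [Finset.sum_range_succ]
    exact (gd_tri w _ (x m) _).trans (add_le_add (ih (by omega)) (h _ _))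

lemma bellman {V : Type*} [Finite V] (w : V → V → ℝ≥0∞) (v y : V) (hvy : v ≠ y) :
    ∃ u, u ≠ v ∧ w v u + graphDist w u y = graphDist w v y := by
  have : Nonempty {u // u ≠ v} := ⟨⟨y, hvy.symm⟩⟩
  obtain ⟨⟨u, hu⟩, hmin⟩ := Finite.exists_min (fun u : {u // u ≠ v} => w v u + graphDist w u y)
  refine ⟨u, hu, le_antisymm ?_ ?_⟩
  · refine le_iInf fun t => ?_
    apply le_hop
    intro m _ x h0 h1
    induction m generalizing x with
    | zero => exact absurd (h0.symm.trans h1) hvy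
    | succ m ih =>
      rw [Finset.sum_range_succ']
      by_cases hx : x 1 = v
      · exact (ih (by omega) (fun j => x (j+1)) hx h1).trans (le_add_of_nonneg_right zero_le)
      · refine (hmin ⟨x 1, hx⟩).trans ?_
        rw [add_comm]
        simp only [h0, zero_add]
        gcongr
        have := hop_le w m m le_rfl (fun j => x (j+1))
        simp only [zero_add, h1] at this
        exact (gd_le_hop w m _ _).trans this
  · exact (gd_tri w v u y).trans (by gcongr; exact gd_le w v u)

lemma gd_ge_one {V : Type*} [Finite V] (w : V → V → ℝ≥0∞)
    (hw : ∀ a b, a ≠ b → w a b ≠ ⊤ → 1 ≤ w a b) (u v : V) (h : u ≠ v) : 1 ≤ graphDist w u v := by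
  obtain ⟨x, hx, he⟩ := bellman w u v h
  rw [← he]
  refine le_trans ?_ (le_add_of_nonneg_right zero_le)
  by_cases ht : w u x = ⊤
  · simp [ht]
  · exact hw _ _ hx.symm ht

lemma hop_exact {V : Type*} [Finite V] (w : V → V → ℝ≥0∞)
    (hw : ∀ a b, a ≠ b → w a b ≠ ⊤ → 1 ≤ w a b) (t : ℕ) (u v : V) (h : graphDist w u v ≤ t) :
    hopDist w t u v ≤ graphDist w u v := by
  induction t generalizing u with
  | zero =>
    by_cases huv : u = v
    · subst huv; simp [hop_refl]
    · have := (gd_ge_one w hw u v huv).trans h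
      simp at this
  | succ t ih =>
    by_cases huv : u = v
    · subst huv; simp [hop_refl]
    obtain ⟨x, hx, he⟩ := bellman w u v huv
    have h1 : 1 ≤ w u x := by
      by_cases ht : w u x = ⊤
      · simp [ht]
      · exact hw _ _ hx.symm ht
    rw [← he]
    refine (hop_cons w t u x v).trans ?_
    gcongr
    apply ih
    have : 1 + graphDist w x v ≤ 1 + (t:ℝ≥0∞) := by
      calc 1 + graphDist w x v ≤ w u x + graphDist w x v := by gcongr
        _ ≤ _ := by rw [he]; refine h.trans ?_; push_cast; rw [add_comm]
    exact (ENNReal.add_le_add_iff_left (by simp)).1 this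

lemma claim_seg {V : Type*} [Finite V] (D : V → V → ℝ) (R : ℕ → V → V → ℝ → Prop)
    (D0 : ∀ x y, 0 ≤ D x y) (Dtri : ∀ x y z, D x z ≤ D x y + D y z)
    (Dself : ∀ x, D x x = 0) (Dz : ∀ x y, D x y = 0 → x = y)
    (Rmono : ∀ h h' x y r r', h ≤ h' → r ≤ r' → R h x y r → R h' x y r')
    (Rrefl : ∀ x, R 0 x x 0)
    (Radd : ∀ h h' x y z r r', 0 ≤ r → 0 ≤ r' → R h x y r → R h' y z r' → R (h + h') x z (r + r'))
    (step : ∀ v y, v ≠ y → ∃ u, R 1 v u (D v u) ∧ D v u + D u y = D v y ∧ 0 < D v u)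
    (A : Set V) (h : ℕ) (η τ : ℝ) (hη : 0 ≤ η) (hτ : 0 ≤ τ)
    (ih : ∀ x y, R h x y ((1 + η) * D x y) ∨ ∃ z ∈ A, R h x z (2 * D x y))
    (S : ℕ) (x y : V) (hS : D x y ≤ S * τ) :
    R (S * (h + 1)) x y ((1 + η) * D x y) ∨
    ∃ p z, D x p + D p y = D x y ∧ R (S * (h + 1)) x p ((1 + η) * D x p) ∧ z ∈ A ∧
      R h p z (2 * τ) := by
  induction S generalizing x with
  | zero =>
    left
    have : x = y := Dz _ _ (le_antisymm (by simpa using hS) (D0 _ _))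
    subst this
    simpa [Dself] using Rrefl x
  | succ S IH =>
    have hne : Nonempty {v // D x v + D v y = D x y ∧ D x v ≤ τ} :=
      ⟨⟨x, by simp [Dself], by simp [Dself, hτ]⟩⟩
    obtain ⟨⟨v, hv1, hv2⟩, hmax⟩ :=
      Finite.exists_max (fun v : {v // D x v + D v y = D x y ∧ D x v ≤ τ} => D x v)
    rcases ih x v with hg | ⟨z, hz, hR⟩
    swap
    · right
      refine ⟨x, z, by simp [Dself], ?_, hz, Rmono _ _ _ _ _ _ le_rfl (by linarith) hR⟩
      rw [Dself, mul_zero]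
      exact Rmono _ _ _ _ _ _ (Nat.zero_le _) le_rfl (Rrefl x)
    by_cases hvy : v = y
    · subst hvy
      left
      exact Rmono _ _ _ _ _ _ (by nlinarith) le_rfl hg
    obtain ⟨u, hu1, hu2, hu3⟩ := step v y hvy
    have t1 := Dtri x u y
    have t2 := Dtri x v u
    have hxu : D x u = D x v + D v u := by linarith
    have hbig : τ < D x u := by
      by_contra hcon
      have := hmax ⟨u, by linarith, not_lt.1 hcon⟩
      simp only at this
      linarith
    have hadv : R (h + 1) x u ((1 + η) * D x u) := by
      refine Rmono _ _ _ _ _ _ le_rfl ?_ (Radd h 1 x v u _ _ (by have := D0 x v; positivity) (D0 _ _) hg hu1)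
      rw [hxu]
      nlinarith [mul_nonneg hη (D0 v u)]
    have hle : D u y ≤ S * τ := by
      push_cast at hS
      linarith
    rcases IH u hle with hg' | ⟨p, z, hp, hRp, hz, hRz⟩
    · left
      refine Rmono _ _ _ _ _ _ ?_ ?_ (Radd _ _ x u y _ _ (by have := D0 x u; positivity) (by have := D0 u y; positivity) hadv hg')
      · apply le_of_eq; ring
      · rw [← mul_add]; apply le_of_eq; congr 1; linarith
    · right
      have t3 := Dtri x u p
      have t4 := Dtri x p y
      have hxp : D x p = D x u + D u p := by linarith
      refine ⟨p, z, by linarith, ?_, hz, hRz⟩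
      refine Rmono _ _ _ _ _ _ ?_ ?_ (Radd _ _ x u p _ _ (by have := D0 x u; positivity) (by have := D0 u p; positivity) hadv hRp)
      · apply le_of_eq; ring
      · rw [← mul_add, hxp]

lemma hop_main {V : Type*} [Finite V] (D : V → V → ℝ) (R : ℕ → V → V → ℝ → Prop)
    (D0 : ∀ x y, 0 ≤ D x y) (Dtri : ∀ x y z, D x z ≤ D x y + D y z)
    (Dsymm : ∀ x y, D x y = D y x)
    (Dself : ∀ x, D x x = 0) (Dz : ∀ x y, D x y = 0 → x = y)
    (Rmono : ∀ h h' x y r r', h ≤ h' → r ≤ r' → R h x y r → R h' x y r')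
    (Rrefl : ∀ x, R 0 x x 0)
    (Rsymm : ∀ h x y r, R h x y r → R h y x r)
    (RD : ∀ h x y r, 0 ≤ r → R h x y r → D x y ≤ r)
    (Radd : ∀ h h' x y z r r', 0 ≤ r → 0 ≤ r' → R h x y r → R h' y z r' → R (h + h') x z (r + r'))
    (step : ∀ v y, v ≠ y → ∃ u, R 1 v u (D v u) ∧ D v u + D u y = D v y ∧ 0 < D v u)
    (A : ℕ → Set V) (hA0 : ∀ x, x ∈ A 0)
    (hA : ∀ i, ∀ x ∈ A i, ∀ y ∈ A i, R 1 x y (D x y) ∨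
      ∃ z ∈ A (i + 1), R 1 x z (D x z) ∧ D x z ≤ D x y)
    (S : ℕ) (hS : 1 ≤ S) (i : ℕ) (hi : 8 * (i : ℝ) ≤ S) (x y : V) :
    R ((7 * S) ^ i) x y ((1 + 8 * i / S) * D x y) ∨
      ∃ z ∈ A (i + 1), R ((7 * S) ^ i) x z (2 * D x y) := by
  have hSpos : (0:ℝ) < S := by exact_mod_cast hS
  induction i generalizing x y with
  | zero =>
    rcases hA 0 x (hA0 x) y (hA0 y) with h | ⟨z, hz, hR, hD⟩
    · left; simpa using h
    · right
      exact ⟨z, hz, Rmono _ _ _ _ _ _ (by simp) (by linarith [D0 x y]) hR⟩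
  | succ i ih =>
    have hi' : 8 * (i : ℝ) ≤ S := by push_cast at hi; linarith
    have ih := ih hi'
    set h := (7 * S) ^ i with hh
    have hh1 : 1 ≤ h := Nat.one_le_pow _ _ (by omega)
    set η : ℝ := 8 * i / S with hη
    have hη0 : 0 ≤ η := by positivity
    set τ : ℝ := D x y / S with hτ
    have hτ0 : 0 ≤ τ := div_nonneg (D0 _ _) hSpos.le
    have hSτ : S * τ = D x y := by rw [hτ]; field_simp
    have hcoef : (1 + 8 * ((i + 1 : ℕ) : ℝ) / S) * D x y = (1 + η) * D x y + 8 * τ := by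
      rw [hη, hτ]; push_cast; field_simp; ring
    have hcoef2 : (1 + η) * D x y + 8 * τ ≤ 2 * D x y := by
      rw [← hcoef]
      apply mul_le_mul_of_nonneg_right _ (D0 _ _)
      have : 8 * ((i + 1 : ℕ) : ℝ) / S ≤ 1 := by rw [div_le_one hSpos]; exact hi
      linarith
    have hhop : 2 * (S * (h + 1)) + 2 * h + 1 ≤ (7 * S) ^ (i + 1) := by
      rw [pow_succ, ← hh]
      nlinarith
    rw [hcoef]
    have C := claim_seg D R D0 Dtri Dself Dz Rmono Rrefl Radd step (A (i+1)) h η τ hη0 hτ0 ih S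
    rcases C x y hSτ.ge with hg | ⟨p, z, hp, hRp, hz, hRz⟩
    · left
      exact Rmono _ _ _ _ _ _ (by omega) (by linarith) hg
    have e1 : 0 ≤ (1 + η) * D x p := by have := D0 x p; positivity
    rcases C y p (by rw [hSτ, Dsymm y p]; linarith [D0 x p]) with hg | ⟨p', z', hp', hRp', hz', hRz'⟩
    · left
      have := Radd _ _ x p y _ _ e1 (by have := D0 y p; positivity) hRp (Rsymm _ _ _ _ hg)
      refine Rmono _ _ _ _ _ _ (by omega) ?_ this
      rw [← mul_add, Dsymm y p, hp]; linarith
    have dz := RD _ _ _ _ (by positivity) hRz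
    have dz' := RD _ _ _ _ (by positivity) hRz'
    have e2 : 0 ≤ (1 + η) * D y p' := by have := D0 y p'; positivity
    have tz : D z z' ≤ D p' p + 4 * τ := by
      have a := Dtri z p z'
      have b := Dtri p p' z'
      rw [Dsymm z p] at a
      rw [Dsymm p p'] at b
      linarith
    have hsum : D x p + D p' p + D y p' = D x y := by
      have := Dsymm y p; linarith
    have hxz := Radd _ _ x p z _ _ e1 (by positivity) hRp hRz
    have hm1 : (1 + η) * D x y = (1 + η) * D x p + (1 + η) * D p' p + (1 + η) * D y p' := by
      rw [← hsum]; ring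
    have hm2 : 0 ≤ η * D p' p := mul_nonneg hη0 (D0 _ _)
    rcases hA (i+1) z hz z' hz' with hE | ⟨q, hq, hRq, hDq⟩
    · left
      have a := Radd _ _ x z z' _ _ (by positivity) (D0 _ _) hxz hE
      have b := Radd _ _ y p' z' _ _ e2 (by positivity) hRp' hRz'
      have c := Radd _ _ x z' y _ _ (by have := D0 z z'; positivity) (by positivity) a (Rsymm _ _ _ _ b)
      refine Rmono _ _ _ _ _ _ (by omega) ?_ c
      linarith
    · right
      refine ⟨q, hq, ?_⟩
      have a := Radd _ _ x z q _ _ (by positivity) (D0 _ _) hxz hRq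
      refine Rmono _ _ _ _ _ _ (by omega) ?_ a
      linarith

lemma bern (a m : ℕ) : (m + 1) * a ^ m + a ^ (m + 1) ≤ (a + 1) ^ (m + 1) := by
  induction m with
  | zero => simp; omega
  | succ m ih =>
    have : a ^ (m+1) ≤ (a+1)^(m+1) := Nat.pow_le_pow_left (by omega) _
    calc (m + 1 + 1) * a ^ (m+1) + a ^ (m + 1 + 1)
        = ((m + 1) * a ^ m + a ^ (m + 1)) * a + a ^ (m+1) := by ring
      _ ≤ (a + 1) ^ (m + 1) * a + (a+1) ^ (m+1) := by gcongr
      _ = _ := by ring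

lemma sum_rank {V : Type*} (f : V → ℝ) (m : ℕ) (A : Finset V) :
    (m + 1) * ∑ y ∈ A, ((A.filter fun z => f y < f z).card) ^ m ≤ A.card ^ (m + 1) := by
  classical
  induction A using Finset.induction_on_min_value f with
  | empty => simp
  | insert a s ha hmin ih =>
    rw [Finset.sum_insert ha, Finset.card_insert_of_notMem ha]
    have h1 : ((insert a s).filter fun z => f a < f z).card ≤ s.card := by
      apply Finset.card_le_card
      intro z hz
      rw [Finset.mem_filter, Finset.mem_insert] at hz
      rcases hz with ⟨rfl | h, h'⟩
      · exact absurd h' (lt_irrefl _)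
      · exact h
    have h2 : ∑ y ∈ s, (((insert a s).filter fun z => f y < f z).card) ^ m
        = ∑ y ∈ s, ((s.filter fun z => f y < f z).card) ^ m := by
      apply Finset.sum_congr rfl
      intro y hy
      rw [Finset.filter_insert, if_neg (not_lt.2 (hmin y hy))]
    rw [h2, mul_add]
    refine le_trans ?_ (bern s.card m)
    gcongr

lemma sample {V : Type*} (D : V → V → ℝ) (A : Finset V) (hA : A.Nonempty)
    (m : ℕ) (hm : 1 ≤ m) : ∃ B : Finset V, B.Nonempty ∧ B.card ≤ m ∧ B ⊆ A ∧
      ∃ E : Finset (V × V), (m + 1) * E.card ≤ A.card ^ 2 + (m + 1) * A.card ∧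
      ∀ x ∈ A, ∀ y ∈ A, (x, y) ∈ E ∨ ∃ z ∈ B, (x, z) ∈ E ∧ D x z ≤ D x y := by
  classical
  set F : Finset (Fin m → V) := Fintype.piFinset fun _ => A with hF
  have hFc : F.card = A.card ^ m := by simp [hF]
  have hFne : F.Nonempty := by
    rw [← Finset.card_pos, hFc]; exact pow_pos (Finset.card_pos.2 hA) _
  let N : (Fin m → V) → ℕ := fun g =>
    ((A ×ˢ A).filter fun p => ∀ j, D p.1 p.2 < D p.1 (g j)).card
  have key : (m + 1) * ∑ g ∈ F, N g ≤ F.card * A.card ^ 2 := by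
    have e : ∑ g ∈ F, N g = ∑ x ∈ A, ∑ y ∈ A, ((A.filter fun z => D x y < D x z).card) ^ m := by
      simp only [N, Finset.card_filter]
      rw [Finset.sum_comm, Finset.sum_product]
      refine Finset.sum_congr rfl fun x _ => Finset.sum_congr rfl fun y _ => ?_
      rw [← Finset.card_filter, ← Finset.card_filter]
      have : (F.filter fun g => ∀ j, D x y < D x (g j))
          = Fintype.piFinset fun _ : Fin m => A.filter fun z => D x y < D x z := by
        ext g
        simp [hF, Fintype.mem_piFinset, forall_and]
      rw [this]; simp
    rw [e, Finset.mul_sum]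
    calc _ ≤ ∑ x ∈ A, A.card ^ (m + 1) := Finset.sum_le_sum fun x _ => sum_rank (D x) m A
      _ = _ := by rw [Finset.sum_const, hFc, smul_eq_mul]; ring
  obtain ⟨g, hg, hN⟩ : ∃ g ∈ F, (m + 1) * N g ≤ A.card ^ 2 := by
    by_contra hcon
    push Not at hcon
    have := Finset.sum_lt_sum_of_nonempty hFne hcon
    rw [Finset.sum_const, smul_eq_mul, ← Finset.mul_sum] at this
    omega
  have hgA : ∀ j, g j ∈ A := by simpa [hF, Fintype.mem_piFinset] using hg
  have hBne : (Finset.univ.image g).Nonempty := ⟨g ⟨0, hm⟩, by simp⟩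
  have hpiv : ∀ x, ∃ z ∈ Finset.univ.image g, ∀ z' ∈ Finset.univ.image g, D x z ≤ D x z' :=
    fun x => Finset.exists_min_image _ (D x) hBne
  choose pv hpv1 hpv2 using hpiv
  refine ⟨Finset.univ.image g, hBne, ?_, ?_, ((A ×ˢ A).filter fun p => ∀ j, D p.1 p.2 < D p.1 (g j)) ∪ A.image (fun x => (x, pv x)), ?_, ?_⟩
  · exact Finset.card_image_le.trans (by simp)
  · intro z hz
    obtain ⟨j, _, rfl⟩ := Finset.mem_image.1 hz
    exact hgA j
  · have := Finset.card_union_le ((A ×ˢ A).filter fun p => ∀ j, D p.1 p.2 < D p.1 (g j)) (A.image (fun x => (x, pv x)))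
    have h2 : (A.image (fun x => (x, pv x))).card ≤ A.card := Finset.card_image_le
    calc _ ≤ (m + 1) * (N g + A.card) := by
          gcongr; exact this.trans (by simp only [N]; omega)
      _ ≤ _ := by rw [mul_add]; omega
  · intro x hx y hy
    by_cases hc : ∀ j, D x y < D x (g j)
    · left
      simp [hx, hy, hc]
    · right
      push Not at hc
      obtain ⟨j, hj⟩ := hc
      refine ⟨pv x, hpv1 x, ?_, (hpv2 x (g j) (by simp)).trans hj⟩
      exact Finset.mem_union_right _ (Finset.mem_image_of_mem _ hx)

lemma chain {V : Type*} [Fintype V] [Nonempty V] (D : V → V → ℝ) (ℓ : ℕ) :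
    ∃ (A : ℕ → Finset V) (E : Finset (V × V)), A 0 = Finset.univ ∧ A (ℓ + 1) = ∅ ∧
      (∀ i, ∀ x ∈ A i, ∀ y ∈ A i, (x, y) ∈ E ∨ ∃ z ∈ A (i + 1), (x, z) ∈ E ∧ D x z ≤ D x y) ∧
      (E.card : ℝ) ≤ 5 * (ℓ + 1) * (Fintype.card V : ℝ) ^ ((1:ℝ) + 1 / ((2:ℝ) ^ (ℓ + 1) - 1)) := by
  classical
  set n : ℝ := (Fintype.card V : ℝ) with hn
  have hn1 : 1 ≤ n := by
    rw [hn]; exact_mod_cast Fintype.card_pos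
  have hn0 : 0 < n := by linarith
  set K : ℝ := (2:ℝ) ^ (ℓ + 1) - 1 with hK
  have hK1 : 1 ≤ K := by
    have : (2:ℝ) ^ 1 ≤ (2:ℝ) ^ (ℓ + 1) := pow_le_pow_right₀ (by norm_num) (by omega)
    rw [hK]; linarith
  have hK0 : 0 < K := by linarith
  let e : ℕ → ℝ := fun i => ((2:ℝ) ^ (ℓ + 1) - 2 ^ i) / K
  have he0 : e 0 = 1 := by simp only [e, pow_zero]; rw [← hK]; exact div_self hK0.ne'
  have hepos : ∀ i ≤ ℓ, 0 ≤ e i := by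
    intro i hi
    apply div_nonneg _ hK0.le
    have : (2:ℝ) ^ i ≤ (2:ℝ) ^ (ℓ + 1) := pow_le_pow_right₀ (by norm_num) (by omega)
    linarith
  have hee : ∀ i, e i * 2 = (1 + 1 / K) + e (i + 1) := by
    intro i
    simp only [e]
    field_simp
    rw [hK]; ring
  have heℓ : e ℓ * 2 = 1 + 1 / K := by
    simp only [e]
    field_simp
    rw [hK]; ring
  let m : ℕ → ℕ := fun i => ⌈n ^ e i⌉₊
  have hmpos : ∀ i, 1 ≤ m i := fun i => Nat.one_le_iff_ne_zero.2
    (by simp only [m]; exact (Nat.ceil_pos.2 (Real.rpow_pos_of_pos hn0 _)).ne')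
  have hm2 : ∀ i ≤ ℓ, (m i : ℝ) ≤ 2 * n ^ e i := by
    intro i hi
    have h1 : 1 ≤ n ^ e i := Real.one_le_rpow hn1 (hepos i hi)
    have := Nat.ceil_lt_add_one (show 0 ≤ n ^ e i by linarith)
    simp only [m]; linarith
  have S := fun (i : ℕ) (A : {A : Finset V // A.Nonempty}) => sample D A.1 A.2 (m i) (hmpos i)
  choose B hB1 hB2 hB3 F hF1 hF2 using S
  let A : ℕ → {A : Finset V // A.Nonempty} := fun i =>
    Nat.rec ⟨Finset.univ, Finset.univ_nonempty⟩ (fun i X => ⟨B (i + 1) X, hB1 _ _⟩) i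
  have hA0 : (A 0).1 = Finset.univ := rfl
  have hAs : ∀ i, (A (i + 1)).1 = B (i + 1) (A i) := fun i => rfl
  have hAc : ∀ i, (A i).1.card ≤ m i := by
    intro i
    cases i with
    | zero =>
      rw [hA0, Finset.card_univ]
      simp only [m, he0, Real.rpow_one, hn, Nat.ceil_natCast, le_refl]
    | succ i => rw [hAs]; exact hB2 _ _
  have hpw : 0 < n ^ (1 + 1 / K) := Real.rpow_pos_of_pos hn0 _
  have hsq : ∀ i ≤ ℓ, ((A i).1.card : ℝ) ^ 2 ≤ 4 * n ^ (e i * 2) := by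
    intro i hi
    have h1 : ((A i).1.card : ℝ) ≤ 2 * n ^ e i :=
      le_trans (by exact_mod_cast hAc i) (hm2 i hi)
    calc ((A i).1.card : ℝ) ^ 2 ≤ (2 * n ^ e i) ^ 2 := by gcongr
      _ = 4 * (n ^ e i) ^ (2:ℝ) := by rw [Real.rpow_two]; ring
      _ = _ := by rw [← Real.rpow_mul hn0.le]
  have hFc : ∀ i < ℓ, ((F (i + 1) (A i)).card : ℝ) ≤ 5 * n ^ (1 + 1 / K) := by
    intro i hi
    have h1 : ((m (i+1) : ℝ) + 1) * (F (i + 1) (A i)).card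
        ≤ ((A i).1.card : ℝ) ^ 2 + ((m (i+1) : ℝ) + 1) * (A i).1.card := by
      exact_mod_cast hF1 (i + 1) (A i)
    have h2 : n ^ e (i + 1) ≤ m (i + 1) := Nat.le_ceil _
    have h3 := hsq i hi.le
    rw [hee, Real.rpow_add hn0] at h3
    have h4 : ((A i).1.card : ℝ) ≤ n ^ (1 + 1 / K) := by
      calc ((A i).1.card : ℝ) ≤ n := by rw [hn]; exact_mod_cast Finset.card_le_univ _
        _ = n ^ (1:ℝ) := (Real.rpow_one n).symm
        _ ≤ _ := Real.rpow_le_rpow_of_exponent_le hn1 (by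
          have : 0 ≤ 1 / K := by positivity
          linarith)
    have h5 : (0:ℝ) < (m (i+1) : ℝ) + 1 := by positivity
    refine le_of_mul_le_mul_left (h1.trans ?_) h5
    nlinarith [mul_le_mul_of_nonneg_left h2 hpw.le, mul_le_mul_of_nonneg_left h4 h5.le]
  refine ⟨fun i => if i ≤ ℓ then (A i).1 else ∅,
    ((Finset.range ℓ).biUnion fun i => F (i + 1) (A i)) ∪ (A ℓ).1 ×ˢ (A ℓ).1, by simp [hA0], by simp, ?_, ?_⟩
  · intro i x hx y hy
    by_cases hi : i ≤ ℓ
    swap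
    · simp [hi] at hx
    simp only [hi, if_true] at hx hy
    rcases hi.eq_or_lt with rfl | hlt
    · left
      exact Finset.mem_union_right _ (Finset.mem_product.2 ⟨hx, hy⟩)
    · have hsub : F (i + 1) (A i) ⊆ (Finset.range ℓ).biUnion fun i => F (i + 1) (A i) :=
        Finset.subset_biUnion_of_mem (fun i => F (i + 1) (A i)) (Finset.mem_range.2 hlt)
      rcases hF2 (i + 1) (A i) x hx y hy with h | ⟨z, hz, h, h'⟩
      · left; exact Finset.mem_union_left _ (hsub h)
      · right
        refine ⟨z, ?_, Finset.mem_union_left _ (hsub h), h'⟩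
        beta_reduce
        rw [if_pos (by omega), hAs]; exact hz
  · have h1 := Finset.card_union_le ((Finset.range ℓ).biUnion fun i => F (i + 1) (A i)) ((A ℓ).1 ×ˢ (A ℓ).1)
    have h2 : ((Finset.range ℓ).biUnion fun i => F (i + 1) (A i)).card ≤ ∑ i ∈ Finset.range ℓ, (F (i + 1) (A i)).card :=
      Finset.card_biUnion_le
    have h3 : ((∑ i ∈ Finset.range ℓ, (F (i + 1) (A i)).card : ℕ) : ℝ) ≤ ℓ * (5 * n ^ (1 + 1 / K)) := by
      push_cast
      calc _ ≤ ∑ i ∈ Finset.range ℓ, 5 * n ^ (1 + 1 / K) :=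
            Finset.sum_le_sum fun i hi => hFc i (Finset.mem_range.1 hi)
        _ = _ := by simp
    have h4 := hsq ℓ le_rfl
    rw [heℓ] at h4
    rw [Finset.card_product] at h1
    have h5 : ((((Finset.range ℓ).biUnion fun i => F (i + 1) (A i)) ∪ (A ℓ).1 ×ˢ (A ℓ).1).card : ℝ)
        ≤ ((∑ i ∈ Finset.range ℓ, (F (i + 1) (A i)).card : ℕ) : ℝ) + ((A ℓ).1.card : ℝ) ^ 2 := by
      rw [sq]
      exact_mod_cast h1.trans (by omega)
    nlinarith

lemma hopset_exists {V : Type} [Fintype V] [Nonempty V] (w : V → V → ℝ≥0∞)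
    (hsym : ∀ a b, w a b = w b a) (hw : ∀ a b, a ≠ b → w a b ≠ ⊤ → 1 ≤ w a b)
    (hfin : ∀ a b, graphDist w a b < ⊤) (ε : ℝ) (hε : 0 < ε) (ℓ S : ℕ) (hS : 1 ≤ S)
    (hS8 : 8 * (ℓ : ℝ) ≤ S) (hSε : 8 * (ℓ : ℝ) / S ≤ ε) :
    ∃ wH : V → V → ℝ≥0∞, (Set.ncard {pr : V × V | wH pr.1 pr.2 ≠ ⊤} : ℝ) ≤
      10 * (ℓ + 1) * (Fintype.card V : ℝ) ^ ((1:ℝ) + 1 / ((2:ℝ) ^ (ℓ + 1) - 1)) ∧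
      ∀ u v : V, (∀ t, graphDist w u v ≤ hopDist (fun a b => min (w a b) (wH a b)) t u v) ∧
        hopDist (fun a b => min (w a b) (wH a b)) ((7 * S) ^ ℓ) u v ≤
          ENNReal.ofReal (1 + ε) * graphDist w u v := by
  classical
  let D : V → V → ℝ := fun u v => (graphDist w u v).toReal
  have hD : ∀ u v, ENNReal.ofReal (D u v) = graphDist w u v := fun u v =>
    ENNReal.ofReal_toReal (hfin u v).ne
  obtain ⟨A, E, hA0, hAl, hA, hE⟩ := chain D ℓ
  let wH : V → V → ℝ≥0∞ := fun a b => if (a, b) ∈ E ∨ (b, a) ∈ E then graphDist w a b else ⊤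
  have hwH : ∀ a b, wH a b = wH b a := by
    intro a b
    simp only [wH, or_comm, gd_symm w hsym a b]
  set w' : V → V → ℝ≥0∞ := fun a b => min (w a b) (wH a b) with hw'
  have hw's : ∀ a b, w' a b = w' b a := by
    intro a b; simp only [hw', hsym a b, hwH a b]
  have hlow : ∀ t u v, graphDist w u v ≤ hopDist w' t u v := by
    apply gd_lower
    intro a b
    refine le_min (gd_le w a b) ?_
    simp only [wH]
    split_ifs
    · exact le_rfl
    · exact le_top
  refine ⟨wH, ?_, fun u v => ⟨fun t => hlow t u v, ?_⟩⟩
  · have hsub : {pr : V × V | wH pr.1 pr.2 ≠ ⊤} ⊆ ((E ∪ E.image Prod.swap : Finset (V × V)) : Set (V × V)) := by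
      rintro ⟨a, b⟩ hab
      simp only [Set.mem_ofPred_eq, wH] at hab
      have hm : (a, b) ∈ E ∨ (b, a) ∈ E := by
        by_contra hcon; exact hab (if_neg hcon)
      simp only [Finset.coe_union, Set.mem_union, Finset.mem_coe, Finset.mem_image]
      rcases hm with h | h
      · exact Or.inl h
      · exact Or.inr ⟨(b, a), h, rfl⟩
    have h1 := Set.ncard_le_ncard hsub (Finset.finite_toSet _)
    rw [Set.ncard_coe_finset] at h1
    have h2 := Finset.card_union_le E (E.image Prod.swap)
    have h3 : (E.image Prod.swap).card ≤ E.card := Finset.card_image_le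
    have h4 : (Set.ncard {pr : V × V | wH pr.1 pr.2 ≠ ⊤} : ℝ) ≤ 2 * E.card := by
      exact_mod_cast (by omega : Set.ncard {pr : V × V | wH pr.1 pr.2 ≠ ⊤} ≤ 2 * E.card)
    linarith
  · let R : ℕ → V → V → ℝ → Prop := fun h x y r => hopDist w' h x y ≤ ENNReal.ofReal r
    have hRE : ∀ x y, (x, y) ∈ E → R 1 x y (D x y) := by
      intro x y hxy
      simp only [R, hD]
      refine (hop_one w' x y).trans ((min_le_right _ _).trans ?_)
      simp [wH, hxy]
    have main := hop_main D R (fun _ _ => ENNReal.toReal_nonneg)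
      (by
        intro x y z
        simp only [D]
        rw [← ENNReal.toReal_add (hfin _ _).ne (hfin _ _).ne]
        exact ENNReal.toReal_mono (ENNReal.add_ne_top.2 ⟨(hfin _ _).ne, (hfin _ _).ne⟩) (gd_tri w x y z))
      (fun x y => by simp only [D, gd_symm w hsym x y])
      (fun x => by simp [D, gd_refl])
      (by
        intro x y h
        by_contra hne
        have := gd_ge_one w hw x y hne
        rw [← hD, h] at this
        simp at this)
      (fun h h' x y r r' hh hr hR => (hop_mono w' hh x y).trans (hR.trans (ENNReal.ofReal_le_ofReal hr)))
      (fun x => by simp [R, hop_refl])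
      (fun h x y r hR => (hop_symm w' hw's h y x).trans hR)
      (fun h x y r hr hR => ENNReal.toReal_le_of_le_ofReal hr ((hlow h x y).trans hR))
      (by
        intro h h' x y z r r' hr hr' h1 h2
        simp only [R]
        rw [ENNReal.ofReal_add hr hr']
        exact (hop_add w' h h' x y z).trans (add_le_add h1 h2))
      (by
        intro v y hvy
        obtain ⟨u, hu, he⟩ := bellman w v y hvy
        have hge : graphDist w v u = w v u := by
          apply le_antisymm (gd_le w v u)
          have := gd_tri w v u y
          rw [← he] at this
          exact (ENNReal.add_le_add_iff_right (hfin u y).ne).1 this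
        refine ⟨u, ?_, ?_, ?_⟩
        · simp only [R, hD, hge]
          exact (hop_one w' v u).trans (min_le_left _ _)
        · simp only [D]
          rw [← ENNReal.toReal_add (hfin _ _).ne (hfin _ _).ne, hge, he]
        · exact ENNReal.toReal_pos (zero_lt_one.trans_le (gd_ge_one w hw v u hu.symm)).ne' (hfin _ _).ne)
      (fun i => (A i : Set V)) (by simp [hA0])
      (by
        intro i x hx y hy
        rcases hA i x hx y hy with h | ⟨z, hz, h, h'⟩
        · exact Or.inl (hRE _ _ h)
        · exact Or.inr ⟨z, hz, hRE _ _ h, h'⟩)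
      S hS ℓ hS8 u v
    rcases main with h | ⟨z, hz, _⟩
    · refine h.trans ?_
      rw [← hD, ← ENNReal.ofReal_mul (by linarith)]
      apply ENNReal.ofReal_le_ofReal
      exact mul_le_mul_of_nonneg_right (by linarith) ENNReal.toReal_nonneg
    · simp [hAl] at hz

/-- existence form of the main hopset theorem (Theorem 3.5,
without the computational complexity claims). -/
theorem main_hopset_existence :
    ∃ c : ℝ, 0 < c ∧
      ∀ (V : Type) (_ : Fintype V) (w : V → V → ℝ≥0∞),
        (∀ a b, w a b = w b a) →
        (∀ a b, a ≠ b → w a b ≠ ⊤ → 1 ≤ w a b) →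
        (∀ a b, graphDist w a b < ⊤) →
        2 ≤ Fintype.card V →
        ∀ Λ : ℝ≥0∞, Λ = (⨆ u, ⨆ v, graphDist w u v) → 2 ≤ Λ →
        ∀ ε : ℝ, 0 < ε → ε < 1 →
        ∀ κ : ℕ, 2 ≤ κ →
        ∀ ρ : ℝ, 0 < ρ → ρ < 1 / 2 → 1 ≤ (κ : ℝ) * ρ →
        ∀ ℓ : ℕ,
          ℓ = ⌊Real.logb 2 ((κ : ℝ) * ρ)⌋₊ + ⌈((κ : ℝ) + 1) / ((κ : ℝ) * ρ)⌉₊ - 1 →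
        ∀ β : ℕ,
          β = ⌈(c * Real.logb 2 Λ.toReal * Real.logb 2 (Fintype.card V) *
                (Real.logb 2 ((κ : ℝ) * ρ) + 1 / ρ) / ε) ^ ℓ⌉₊ →
        ∃ wH : V → V → ℝ≥0∞,
          (Set.ncard {pr : V × V | wH pr.1 pr.2 ≠ ⊤} : ℝ) ≤
            (⌈Real.logb 2 Λ.toReal⌉₊ : ℝ) *
              (Fintype.card V : ℝ) ^ ((1 : ℝ) + 1 / (κ : ℝ)) ∧
          ∀ u v : V,
            graphDist w u v ≤
                hopDist (fun a b => min (w a b) (wH a b)) β u v ∧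
              hopDist (fun a b => min (w a b) (wH a b)) β u v ≤
                ENNReal.ofReal (1 + ε) * graphDist w u v := by
  refine ⟨2 ^ 20, by norm_num, ?_⟩
  intro V _ w hsym hw hfin hcard Λ hΛ hΛ2 ε hε hε1 κ hκ ρ hρ hρ2 hκρ ℓ hℓ β hβ
  have hne : Nonempty V := Fintype.card_pos_iff.1 (by omega)
  have hΛle : ∀ u v, graphDist w u v ≤ Λ := by
    intro u v; rw [hΛ]; exact le_iSup_of_le u (le_iSup_of_le v le_rfl)
  have hΛtop : Λ ≠ ⊤ := by
    obtain ⟨u, hu⟩ := exists_eq_ciSup_of_finite (f := fun u => ⨆ v, graphDist w u v)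
    obtain ⟨v, hv⟩ := exists_eq_ciSup_of_finite (f := fun v => graphDist w u v)
    rw [hΛ, ← hu]
    rw [← hv]
    exact (hfin _ _).ne
  by_cases hΛβ : Λ ≤ β
  · refine ⟨fun _ _ => ⊤, ?_, fun u v => ?_⟩
    · simp; positivity
    · simp only [min_top_right]
      refine ⟨gd_le_hop w β u v, (hop_exact w hw β u v ((hΛle u v).trans hΛβ)).trans ?_⟩
      conv_lhs => rw [← one_mul (graphDist w u v)]
      gcongr
      rw [ENNReal.one_le_ofReal]; linarith
  push Not at hΛβ
  set f := ⌊Real.logb 2 ((κ : ℝ) * ρ)⌋₊ with hf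
  set q := ⌈((κ : ℝ) + 1) / ((κ : ℝ) * ρ)⌉₊ with hq
  have hκ0 : (0:ℝ) < κ := by positivity
  have hκρ0 : 0 < (κ:ℝ) * ρ := by positivity
  have hlog0 : 0 ≤ Real.logb 2 ((κ : ℝ) * ρ) := Real.logb_nonneg (by norm_num) hκρ
  have hρ' : 2 < 1 / ρ := by rw [lt_div_iff₀ hρ]; linarith
  have hdiv : ((κ : ℝ) + 1) / ((κ : ℝ) * ρ) = 1 / ρ + 1 / (κ * ρ) := by field_simp
  have hq3 : 3 ≤ q := by
    have : 2 < q := by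
      rw [hq, Nat.lt_ceil, hdiv]
      have : 0 < 1 / (κ * ρ) := by positivity
      push_cast; linarith
    omega
  have hℓ2 : 2 ≤ ℓ := by omega
  have hℓq : ℓ + 1 = f + q := by omega
  -- exponent bound
  have hKκ : (κ : ℝ) ≤ (2:ℝ) ^ (ℓ + 1) - 1 := by
    have h1 : (κ : ℝ) * ρ < 2 ^ (f + 1) := by
      have := Nat.lt_floor_add_one (Real.logb 2 ((κ : ℝ) * ρ))
      rw [Real.logb_lt_iff_lt_rpow (by norm_num) hκρ0] at this
      rw [← Real.rpow_natCast]
      push_cast; exact this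
    have h2 : (κ : ℝ) + 1 ≤ q * (κ * ρ) := by
      rw [← div_le_iff₀ hκρ0]; exact Nat.le_ceil _
    have h3 : (q : ℝ) ≤ 2 ^ (q - 1) := by
      have : q - 1 < 2 ^ (q - 1) := Nat.lt_two_pow_self
      exact_mod_cast (by omega : q ≤ 2 ^ (q - 1))
    have h4 : (q:ℝ) * (κ * ρ) ≤ 2 ^ (q - 1) * 2 ^ (f + 1) := by gcongr
    rw [← pow_add, show q - 1 + (f + 1) = ℓ + 1 by omega] at h4
    linarith
  set X := Real.logb 2 ((κ : ℝ) * ρ) + 1 / ρ with hX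
  have hX2 : 2 ≤ X := by rw [hX]; linarith
  have hℓX : (ℓ : ℝ) ≤ 2 * X := by
    have h1 : (f : ℝ) ≤ Real.logb 2 ((κ : ℝ) * ρ) := Nat.floor_le hlog0
    have h2 : (q : ℝ) < ((κ : ℝ) + 1) / ((κ : ℝ) * ρ) + 1 := Nat.ceil_lt_add_one (by positivity)
    have h3 : 1 / (κ * ρ) ≤ 1 := by rw [div_le_one hκρ0]; exact hκρ
    have h4 : (ℓ : ℝ) + 1 = f + q := by exact_mod_cast hℓq
    rw [hdiv] at h2
    linarith
  have hΛr2 : 2 ≤ Λ.toReal := by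
    have := ENNReal.toReal_mono hΛtop hΛ2
    simpa using this
  have hlΛ : 1 ≤ Real.logb 2 Λ.toReal := by
    rw [Real.le_logb_iff_rpow_le (by norm_num) (by linarith)]; simpa using hΛr2
  have hln : 1 ≤ Real.logb 2 (Fintype.card V) := by
    rw [Real.le_logb_iff_rpow_le (by norm_num) (by positivity)]
    rw [Real.rpow_one]; exact_mod_cast hcard
  set L := 2 ^ 20 * Real.logb 2 Λ.toReal * Real.logb 2 (Fintype.card V) * X / ε with hL
  have hL1 : 2 ^ 20 * X / ε ≤ L := by
    rw [hL]
    gcongr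
    nlinarith [mul_le_mul hlΛ hln (by norm_num) (by linarith)]
  have hL2 : (2:ℝ) ^ 20 ≤ L := by
    refine le_trans ?_ hL1
    rw [le_div_iff₀ hε]
    nlinarith
  set S := ⌈8 * (ℓ : ℝ) / ε⌉₊ with hS
  have hℓr : (2:ℝ) ≤ ℓ := by exact_mod_cast hℓ2
  have hSle : 8 * (ℓ : ℝ) / ε ≤ S := Nat.le_ceil _
  have hbig : 8 * (ℓ : ℝ) ≤ 8 * (ℓ : ℝ) / ε := by
    rw [le_div_iff₀ hε]; nlinarith
  have hS8 : 8 * (ℓ : ℝ) ≤ S := hbig.trans hSle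
  have hSpos : (0:ℝ) < S := by linarith
  have hS1 : 1 ≤ S := by exact_mod_cast (by linarith : (1:ℝ) ≤ S)
  have hSε : 8 * (ℓ : ℝ) / S ≤ ε := by
    rw [div_le_iff₀ hSpos]
    rw [div_le_iff₀ hε] at hSle
    linarith
  have hSL : 7 * (S:ℝ) ≤ L := by
    have h1 : (S : ℝ) < 8 * (ℓ : ℝ) / ε + 1 := Nat.ceil_lt_add_one (by positivity)
    have h2 : 8 * (ℓ : ℝ) / ε ≤ 16 * (X / ε) := by
      rw [← mul_div_assoc]
      exact div_le_div_of_nonneg_right (by linarith) hε.le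
    have h3 : 1 ≤ X / ε := by rw [le_div_iff₀ hε]; linarith
    rw [mul_div_assoc] at hL1
    linarith
  have hβL : L ^ ℓ ≤ β := by rw [hβ]; exact Nat.le_ceil _
  have hSβ : (7 * S) ^ ℓ ≤ β := by
    have : (7 * (S:ℝ)) ^ ℓ ≤ L ^ ℓ := by gcongr
    exact_mod_cast this.trans hβL
  obtain ⟨wH, hc, hd⟩ := hopset_exists w hsym hw hfin ε hε ℓ S hS1 hS8 hSε
  refine ⟨wH, hc.trans ?_, fun u v => ⟨?_, (hop_mono _ hSβ u v).trans (hd u v).2⟩⟩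
  · have hΛL : (2:ℝ) ^ (20 * ℓ) ≤ Λ.toReal := by
      rw [pow_mul]
      calc ((2:ℝ) ^ 20) ^ ℓ ≤ L ^ ℓ := by gcongr
        _ ≤ β := hβL
        _ ≤ _ := by
          have := ENNReal.toReal_mono hΛtop hΛβ.le
          simpa using this
    have hlog : (20 * ℓ : ℝ) ≤ Real.logb 2 Λ.toReal := by
      rw [Real.le_logb_iff_rpow_le (by norm_num) (by linarith)]
      rw [show (20 * ℓ : ℝ) = ((20 * ℓ : ℕ) : ℝ) by push_cast; ring, Real.rpow_natCast]
      exact hΛL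
    have hn1 : (1:ℝ) ≤ (Fintype.card V : ℝ) := by exact_mod_cast (by omega : 1 ≤ Fintype.card V)
    apply mul_le_mul
    · have := Nat.le_ceil (Real.logb 2 Λ.toReal)
      linarith
    · apply Real.rpow_le_rpow_of_exponent_le hn1
      have : 1 / ((2:ℝ) ^ (ℓ + 1) - 1) ≤ 1 / κ := one_div_le_one_div_of_le hκ0 hKκ
      linarith
    · positivity
    · positivity
  · exact (hd u v).1 β
end
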